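/- arXiv:1309.2123 — 4 statements merged into one kernel-verified Lean document; each statement's English description precedes it below -/
import Mathlib

section
/- Consider the second-order recurrence T_{n+1}(x) = (x + (α²−β² −(2n+2c+α+β)(2n+2c+α+β+2))/(2(2n+2c+α+β)(2n+2c+α+β+2))) T_n(x) − ((n+c)(n+c+α)(n+c+β)(n+c+α+β)/((2n+2c+α+β−1)(2n+2c+α+β)²(2n+2c+α+β+1))) T_{n−1}(x), and the recurrence T_{n+1}(x) = (x − (7+36(2n+1)(2n+3))/(72(2n+1)(2n+3))) T_n(x) − ((n−1/12)(n+5/12)(n+7/12)(n+13/12)/((2n)(2n+1)²(2n+2))) T_{n−1}(x). For real parameters (α,β,c), the coefficients of these two recurrences agree for every integer n ≥ 1 if and only if (α,β,c) is one of the four triples (−1/2, −2/3, 13/12), (1/2, −2/3, 7/12), (−1/2, 2/3, 5/12), (1/2, 2/3, −1/12). -/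
noncomputable section

/-- Additive coefficient of `T_n` (the part added to `x`) in the associated Jacobi
recurrence `T_{n+1}(x) = (x + jacA n) T_n(x) - jacB n T_{n-1}(x)`. -/
def jacA (α β c : ℝ) (n : ℕ) : ℝ :=
  (α^2 - β^2 - (2*(n:ℝ) + 2*c + α + β) * (2*(n:ℝ) + 2*c + α + β + 2))
    / (2 * (2*(n:ℝ) + 2*c + α + β) * (2*(n:ℝ) + 2*c + α + β + 2))

/-- Coefficient of `T_{n-1}` in the associated Jacobi recurrence. -/
def jacB (α β c : ℝ) (n : ℕ) : ℝ :=
  ((n:ℝ) + c) * ((n:ℝ) + c + α) * ((n:ℝ) + c + β) * ((n:ℝ) + c + α + β)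
    / ((2*(n:ℝ) + 2*c + α + β - 1) * (2*(n:ℝ) + 2*c + α + β)^2 * (2*(n:ℝ) + 2*c + α + β + 1))

/-- Additive coefficient of `T_n` in the Atkin-type recurrence
`T_{n+1}(x) = (x - (7+36(2n+1)(2n+3))/(72(2n+1)(2n+3))) T_n(x) - atkB n T_{n-1}(x)`,
written as the part added to `x`. -/
def atkA (n : ℕ) : ℝ :=
  -((7 + 36 * (2*(n:ℝ) + 1) * (2*(n:ℝ) + 3)) / (72 * (2*(n:ℝ) + 1) * (2*(n:ℝ) + 3)))

/-- Coefficient of `T_{n-1}` in the Atkin-type recurrence. -/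
def atkB (n : ℕ) : ℝ :=
  ((n:ℝ) - 1/12) * ((n:ℝ) + 5/12) * ((n:ℝ) + 7/12) * ((n:ℝ) + 13/12)
    / ((2*(n:ℝ)) * (2*(n:ℝ) + 1)^2 * (2*(n:ℝ) + 2))

theorem coefficients_agree_iff (α β c : ℝ)
    (hden : ∀ n : ℕ, 1 ≤ n →
      2*(n:ℝ) + 2*c + α + β ≠ 0 ∧ 2*(n:ℝ) + 2*c + α + β + 2 ≠ 0 ∧
      2*(n:ℝ) + 2*c + α + β - 1 ≠ 0 ∧ 2*(n:ℝ) + 2*c + α + β + 1 ≠ 0) :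
    (∀ n : ℕ, 1 ≤ n → jacA α β c n = atkA n ∧ jacB α β c n = atkB n) ↔
      ((α, β, c) = (-(1:ℝ)/2, -(2:ℝ)/3, (13:ℝ)/12) ∨
       (α, β, c) = ((1:ℝ)/2, -(2:ℝ)/3, (7:ℝ)/12) ∨
       (α, β, c) = (-(1:ℝ)/2, (2:ℝ)/3, (5:ℝ)/12) ∨
       (α, β, c) = ((1:ℝ)/2, (2:ℝ)/3, -(1:ℝ)/12)) := by
  constructor
  · intro h
    have key : ∀ n : ℕ, 1 ≤ n → 36 * (α^2 - β^2) * ((2*(n:ℝ) + 1) * (2*(n:ℝ) + 3))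
        + 7 * ((2*(n:ℝ) + 2*c + α + β) * (2*(n:ℝ) + 2*c + α + β + 2)) = 0 := by
      intro n hn
      obtain ⟨h1, h2, -, -⟩ := hden n hn
      have hA := (h n hn).1
      have h3 : (2*(n:ℝ) + 1) ≠ 0 := by positivity
      have h4 : (2*(n:ℝ) + 3) ≠ 0 := by positivity
      unfold jacA atkA at hA
      generalize hu : 2*(n:ℝ) + 2*c + α + β = u at *
      rw [← neg_div, div_eq_div_iff (by positivity) (by positivity)] at hA
      linear_combination hA / 2
    have k1 := key 1 (by norm_num)
    have k2 := key 2 (by norm_num)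
    have k3 := key 3 (by norm_num)
    push_cast at k1 k2 k3
    have hD : α^2 - β^2 = -7/36 := by
      linear_combination (k1 - 2 * k2 + k3) / 288
    have hs : c = (1 - α - β) / 2 := by
      rw [hD] at k1 k2
      linear_combination (k2 - k1) / 56
    have hB := (h 1 le_rfl).2
    unfold jacB atkB at hB
    subst hs
    have e : 2 * ((1:ℕ):ℝ) + 2 * ((1 - α - β) / 2) + α + β = 3 := by push_cast; ring
    rw [e] at hB
    norm_num at hB
    have hb : β^2 = 4/9 := by
      have hα : α^2 = β^2 - 7/36 := by linarith
      have hpq : (α^2 - β^2)^2 = (-7/36)^2 := by rw [hD]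
      linear_combination (-32) * hB + (1/36) * hpq - hD / 2
    have ha : α^2 = 1/4 := by linarith
    have ha' : α = 1/2 ∨ α = -1/2 := by
      have : (α - 1/2) * (α + 1/2) = 0 := by linear_combination ha
      rcases mul_eq_zero.mp this with h | h
      · left; linarith
      · right; linarith
    have hb' : β = 2/3 ∨ β = -2/3 := by
      have : (β - 2/3) * (β + 2/3) = 0 := by linear_combination hb
      rcases mul_eq_zero.mp this with h | h
      · left; linarith
      · right; linarith
    rcases ha' with rfl | rfl <;> rcases hb' with rfl | rfl <;> norm_num
  · intro h n hn
    have h0 : (n:ℝ) ≠ 0 := by positivity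
    have h1 : (2*(n:ℝ) + 1) ≠ 0 := by positivity
    have h2 : (2*(n:ℝ) + 2) ≠ 0 := by positivity
    have h3 : (2*(n:ℝ) + 3) ≠ 0 := by positivity
    have hs : 2*(n:ℝ) + 2*c + α + β = 2*(n:ℝ) + 1 := by
      rcases h with h | h | h | h <;> simp only [Prod.mk.injEq] at h <;>
        obtain ⟨rfl, rfl, rfl⟩ := h <;> ring
    have hD : α^2 - β^2 = -7/36 := by
      rcases h with h | h | h | h <;> simp only [Prod.mk.injEq] at h <;>
        obtain ⟨rfl, rfl, rfl⟩ := h <;> norm_num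
    constructor
    · unfold jacA atkA
      rw [hs, hD, show 2*(n:ℝ) + 1 + 2 = 2*(n:ℝ) + 3 by ring, ← neg_div,
        div_eq_div_iff (by positivity) (by positivity)]
      ring
    · unfold jacB atkB
      rw [hs]
      congr 1
      · rcases h with h | h | h | h <;> simp only [Prod.mk.injEq] at h <;>
          obtain ⟨rfl, rfl, rfl⟩ := h <;> ring
      · ring
end
end

section
/- For every integer n ≥ 0 and every real x, the rescaled Atkin polynomials satisfy 𝓐_{n+1}(x) = (x − 8)·V_n^{(−1/2,2/3)}(x;5/12) + (91/12)·𝒱_n^{(−1/2,2/3)}(x;5/12). -/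
noncomputable section

/-- The rescaled Atkin polynomials `𝓐_n`. -/
def Atkin : ℕ → ℝ → ℝ
  | 0, _ => 1
  | 1, x => x - 5/12
  | 2, x => x^2 - (205/216) * x + 935/10368
  | n + 3, x =>
      (x - 2 * (((n : ℝ) + 2)^2 - 29/144) / (4 * ((n : ℝ) + 2)^2 - 1)) * Atkin (n + 2) x
      - ((((n : ℝ) + 2) - 13/12) * (((n : ℝ) + 2) - 7/12) * (((n : ℝ) + 2) - 5/12)
          * (((n : ℝ) + 2) + 1/12)
         / (2 * ((n : ℝ) + 2) * (2 * ((n : ℝ) + 2) - 1)^2 * (2 * ((n : ℝ) + 2) - 2)))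
        * Atkin (n + 1) x

/-- `λ₀` for the associated Jacobi recurrence. -/
def lam0 (α β c : ℝ) : ℝ := (c + β + 1) * (c + α + β + 1) / ((2*c + α + β + 1) * (2*c + α + β + 2))

/-- `μ₀` for the associated Jacobi recurrence. -/
def mu0 (α β c : ℝ) : ℝ := c * (c + α) / ((2*c + α + β) * (2*c + α + β + 1))

/-- Solutions of the associated Jacobi second order recurrence with `T 0 = 1` and
prescribed `T 1`. -/
def AJ (α β c : ℝ) (T1 : ℝ → ℝ) : ℕ → ℝ → ℝ
  | 0, _ => 1
  | 1, x => T1 x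
  | n + 2, x =>
      (x + (α^2 - β^2 - (2*((n:ℝ)+1) + 2*c + α + β) * (2*((n:ℝ)+1) + 2*c + α + β + 2))
            / (2 * (2*((n:ℝ)+1) + 2*c + α + β) * (2*((n:ℝ)+1) + 2*c + α + β + 2)))
        * AJ α β c T1 (n + 1) x
      - ((((n:ℝ)+1) + c) * (((n:ℝ)+1) + c + α) * (((n:ℝ)+1) + c + β) * (((n:ℝ)+1) + c + α + β)
          / ((2*((n:ℝ)+1) + 2*c + α + β - 1) * (2*((n:ℝ)+1) + 2*c + α + β)^2
              * (2*((n:ℝ)+1) + 2*c + α + β + 1)))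
        * AJ α β c T1 n x

/-- The monic associated Jacobi polynomials `V_n^{(α,β)}(x;c)`. -/
def V (α β c : ℝ) : ℕ → ℝ → ℝ :=
  AJ α β c (fun x => x - (lam0 α β c + mu0 α β c))

/-- The monic associated Jacobi polynomials `𝒱_n^{(α,β)}(x;c)`. -/
def calV (α β c : ℝ) : ℕ → ℝ → ℝ :=
  AJ α β c (fun x => x - lam0 α β c)

theorem atkin_eq_V_add_calV (n : ℕ) (x : ℝ) :
    Atkin (n + 1) x =
      (x - 8) * V (-(1:ℝ)/2) ((2:ℝ)/3) ((5:ℝ)/12) n x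
        + (91/12) * calV (-(1:ℝ)/2) ((2:ℝ)/3) ((5:ℝ)/12) n x := by
  induction n using Nat.strong_induction_on with
  | _ n ih =>
    match n, ih with
    | 0, _ =>
      simp only [V, calV, AJ, Atkin]
      ring
    | 1, _ =>
      simp only [V, calV, AJ, Atkin, lam0, mu0]
      ring
    | k + 2, ih =>
      have h1 := ih (k + 1) (by omega)
      have h0 := ih k (by omega)
      have hk : (0:ℝ) ≤ k := Nat.cast_nonneg k
      simp only [V, calV] at h1 h0 ⊢
      rw [Atkin, AJ, AJ, h1, h0]
      have e1 : ((-(1:ℝ)/2)^2 - ((2:ℝ)/3)^2 - (2*((k:ℝ)+1) + 2*((5:ℝ)/12) + (-(1:ℝ)/2) + (2:ℝ)/3) * (2*((k:ℝ)+1) + 2*((5:ℝ)/12) + (-(1:ℝ)/2) + (2:ℝ)/3 + 2))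
            / (2 * (2*((k:ℝ)+1) + 2*((5:ℝ)/12) + (-(1:ℝ)/2) + (2:ℝ)/3) * (2*((k:ℝ)+1) + 2*((5:ℝ)/12) + (-(1:ℝ)/2) + (2:ℝ)/3 + 2))
          = - (2 * (((k : ℝ) + 2)^2 - 29/144) / (4 * ((k : ℝ) + 2)^2 - 1)) := by
        have a : 2*((k:ℝ)+1) + 2*((5:ℝ)/12) + (-(1:ℝ)/2) + (2:ℝ)/3 = 2*k+3 := by ring
        have b : 4 * ((k : ℝ) + 2)^2 - 1 = (2*k+3)*(2*k+3+2) := by ring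
        rw [a, b]
        have : (2*(k:ℝ)+3) ≠ 0 := by positivity
        have : (2*(k:ℝ)+3+2) ≠ 0 := by positivity
        field_simp
        ring
      have e2 : (((k:ℝ)+1) + (5:ℝ)/12) * (((k:ℝ)+1) + (5:ℝ)/12 + (-(1:ℝ)/2)) * (((k:ℝ)+1) + (5:ℝ)/12 + (2:ℝ)/3) * (((k:ℝ)+1) + (5:ℝ)/12 + (-(1:ℝ)/2) + (2:ℝ)/3)
          / ((2*((k:ℝ)+1) + 2*((5:ℝ)/12) + (-(1:ℝ)/2) + (2:ℝ)/3 - 1) * (2*((k:ℝ)+1) + 2*((5:ℝ)/12) + (-(1:ℝ)/2) + (2:ℝ)/3)^2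
              * (2*((k:ℝ)+1) + 2*((5:ℝ)/12) + (-(1:ℝ)/2) + (2:ℝ)/3 + 1))
          = (((k : ℝ) + 2) - 13/12) * (((k : ℝ) + 2) - 7/12) * (((k : ℝ) + 2) - 5/12)
          * (((k : ℝ) + 2) + 1/12)
         / (2 * ((k : ℝ) + 2) * (2 * ((k : ℝ) + 2) - 1)^2 * (2 * ((k : ℝ) + 2) - 2)) := by
        congr 1 <;> ring
      rw [e1, e2]
      ring
end
end

section
/- For every integer n ≥ 0 and every real x, the rescaled Atkin polynomials satisfy 𝓐_{n+1}(x) = x·V_n^{(1/2,−2/3)}(x;7/12) − (5/12)·𝒱_n^{(1/2,−2/3)}(x;7/12). -/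
noncomputable section

theorem atkin_eq_xV_sub_calV (n : ℕ) (x : ℝ) :
    Atkin (n + 1) x =
      x * V ((1:ℝ)/2) (-(2:ℝ)/3) ((7:ℝ)/12) n x
        - (5/12) * calV ((1:ℝ)/2) (-(2:ℝ)/3) ((7:ℝ)/12) n x := by
  induction n using Nat.strong_induction_on with
  | _ n ih =>
    match n, ih with
    | 0, _ => simp only [V, calV, Atkin, AJ]; ring
    | 1, _ =>
      simp only [V, calV, Atkin, AJ, lam0, mu0]
      norm_num
      ring
    | k + 2, ih =>
      have h0 := ih k (by omega)
      have h1 := ih (k + 1) (by omega)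
      have hk : (0:ℝ) ≤ (k:ℝ) := Nat.cast_nonneg k
      have hA : (((1:ℝ)/2)^2 - (-(2:ℝ)/3)^2 - (2*((k:ℝ)+1) + 2*((7:ℝ)/12) + (1:ℝ)/2 + -(2:ℝ)/3) * (2*((k:ℝ)+1) + 2*((7:ℝ)/12) + (1:ℝ)/2 + -(2:ℝ)/3 + 2))
            / (2 * (2*((k:ℝ)+1) + 2*((7:ℝ)/12) + (1:ℝ)/2 + -(2:ℝ)/3) * (2*((k:ℝ)+1) + 2*((7:ℝ)/12) + (1:ℝ)/2 + -(2:ℝ)/3 + 2))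
          = - (2 * (((k : ℝ) + 2)^2 - 29/144) / (4 * ((k : ℝ) + 2)^2 - 1)) := by
        have e1 : (2*((k:ℝ)+1) + 2*((7:ℝ)/12) + (1:ℝ)/2 + -(2:ℝ)/3) = 2*k+3 := by ring
        have e2 : 4 * ((k : ℝ) + 2)^2 - 1 = (2*k+3)*(2*k+5) := by ring
        have e3 : (2*(k:ℝ)+3+2) = 2*k+5 := by ring
        rw [e1, e2, e3]
        have : (2*(k:ℝ)+3) ≠ 0 := by positivity
        have : (2*(k:ℝ)+5) ≠ 0 := by positivity
        field_simp
        ring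
      have hB : ((((k:ℝ)+1) + (7:ℝ)/12) * (((k:ℝ)+1) + (7:ℝ)/12 + (1:ℝ)/2) * (((k:ℝ)+1) + (7:ℝ)/12 + -(2:ℝ)/3) * (((k:ℝ)+1) + (7:ℝ)/12 + (1:ℝ)/2 + -(2:ℝ)/3)
          / ((2*((k:ℝ)+1) + 2*((7:ℝ)/12) + (1:ℝ)/2 + -(2:ℝ)/3 - 1) * (2*((k:ℝ)+1) + 2*((7:ℝ)/12) + (1:ℝ)/2 + -(2:ℝ)/3)^2
              * (2*((k:ℝ)+1) + 2*((7:ℝ)/12) + (1:ℝ)/2 + -(2:ℝ)/3 + 1)))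
          = ((((k : ℝ) + 2) - 13/12) * (((k : ℝ) + 2) - 7/12) * (((k : ℝ) + 2) - 5/12)
          * (((k : ℝ) + 2) + 1/12)
         / (2 * ((k : ℝ) + 2) * (2 * ((k : ℝ) + 2) - 1)^2 * (2 * ((k : ℝ) + 2) - 2))) := by
        congr 1 <;> ring
      simp only [V, calV] at h0 h1 ⊢
      rw [Atkin, AJ, AJ, hA, hB, h0, h1]
      ring
end
end

section
/- For all integers n ≥ 0 and 0 ≤ k ≤ n, and for every real y, the following identity of terminating hypergeometric sums holds: ₄F₃(k−n, n+k+2, −1/12, 7/12; k+11/12, k+19/12, 1; y) − (5y/12)·((k−n)(n+k+2))/((k+19/12)(k+11/12))·₄F₃(k+1−n, n+k+3, 11/12, 7/12; k+1+11/12, k+1+19/12, 2; y) = (6/5)·₄F₃(k−n, n+k+2, 11/12, −5/12; k+11/12, k+19/12, 1; y) − (1/5)·₄F₃(k−n, n+k+2, −1/12, −5/12; k+11/12, k+19/12, 1; y). -/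
noncomputable section

/-- Rising factorial (Pochhammer symbol) `(a)_n = a(a+1)⋯(a+n-1)`. -/
def poch (a : ℝ) (n : ℕ) : ℝ := ∏ i ∈ Finset.range n, (a + (i : ℝ))

/-- Terminating `₄F₃(a₁,a₂,a₃,a₄;b₁,b₂,b₃;y)`, summed up to the termination index `m`. -/
def F43 (a₁ a₂ a₃ a₄ b₁ b₂ b₃ : ℝ) (m : ℕ) (y : ℝ) : ℝ :=
  ∑ j ∈ Finset.range (m + 1),
    poch a₁ j * poch a₂ j * poch a₃ j * poch a₄ j
      / (poch b₁ j * poch b₂ j * poch b₃ j * (Nat.factorial j : ℝ)) * y ^ j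

theorem poch_zero' (a : ℝ) : poch a 0 = 1 := by simp [poch]

theorem poch_succ_left (a b : ℝ) (h : b = a + 1) (j : ℕ) : poch a (j + 1) = a * poch b j := by
  subst h
  unfold poch
  rw [Finset.prod_range_succ']
  rw [mul_comm]
  congr 1
  · simp
  · apply Finset.prod_congr rfl
    intro i _
    push_cast
    ring

theorem poch_succ_right (a : ℝ) (j : ℕ) : poch a (j + 1) = poch a j * (a + j) := by
  unfold poch
  rw [Finset.prod_range_succ]

theorem poch_ne (a : ℝ) (ha : 0 < a) (j : ℕ) : poch a j ≠ 0 := by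
  unfold poch
  apply Finset.prod_ne_zero_iff.mpr
  intro i _
  positivity

theorem hypergeometric_contiguous_identity (n k : ℕ) (hk : k ≤ n) (y : ℝ) :
    F43 ((k:ℝ) - (n:ℝ)) ((n:ℝ) + (k:ℝ) + 2) (-1/12) (7/12)
        ((k:ℝ) + 11/12) ((k:ℝ) + 19/12) 1 (n - k) y
      - (5 * y / 12) * (((k:ℝ) - (n:ℝ)) * ((n:ℝ) + (k:ℝ) + 2))
          / (((k:ℝ) + 19/12) * ((k:ℝ) + 11/12)) *
        (∑ j ∈ Finset.range (n - k),
          poch ((k:ℝ) + 1 - (n:ℝ)) j * poch ((n:ℝ) + (k:ℝ) + 3) j * poch (11/12) j * poch (7/12) j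
            / (poch ((k:ℝ) + 1 + 11/12) j * poch ((k:ℝ) + 1 + 19/12) j * poch 2 j
                * (Nat.factorial j : ℝ)) * y ^ j)
    = (6/5) * F43 ((k:ℝ) - (n:ℝ)) ((n:ℝ) + (k:ℝ) + 2) (11/12) (-5/12)
          ((k:ℝ) + 11/12) ((k:ℝ) + 19/12) 1 (n - k) y
      - (1/5) * F43 ((k:ℝ) - (n:ℝ)) ((n:ℝ) + (k:ℝ) + 2) (-1/12) (-5/12)
          ((k:ℝ) + 11/12) ((k:ℝ) + 19/12) 1 (n - k) y := by
  unfold F43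
  simp only [Finset.sum_range_succ' _ (n - k)]
  simp only [poch_zero', Finset.mul_sum, mul_add]
  have key : ∀ A B C D E F G : ℝ, A - B = C - D → E = F - G →
      A + E - B = C + F - (D + G) := by
    intro A B C D E F G h1 h2
    linarith
  apply key
  · rw [← Finset.sum_sub_distrib, ← Finset.sum_sub_distrib]
    apply Finset.sum_congr rfl
    intro j _
    have hk0 : (0:ℝ) ≤ k := Nat.cast_nonneg k
    have e1 := poch_succ_left ((k:ℝ) - n) ((k:ℝ) + 1 - n) (by ring) j
    have e2 := poch_succ_left ((n:ℝ) + k + 2) ((n:ℝ) + k + 3) (by ring) j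
    have e3 := poch_succ_left (-1/12) (11/12) (by norm_num) j
    have e4 := poch_succ_left (-5/12) (7/12) (by norm_num) j
    have e5 := poch_succ_left ((k:ℝ) + 11/12) ((k:ℝ) + 1 + 11/12) (by ring) j
    have e6 := poch_succ_left ((k:ℝ) + 19/12) ((k:ℝ) + 1 + 19/12) (by ring) j
    have e7 := poch_succ_left 1 2 (by norm_num) j
    have e8 := poch_succ_right (11/12) j
    have e9 := poch_succ_right (7/12) j
    rw [e1, e2, e3, e4, e5, e6, e7, e8, e9, Nat.factorial_succ]
    have n1 := poch_ne ((k:ℝ) + 1 + 11/12) (by positivity) j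
    have n2 := poch_ne ((k:ℝ) + 1 + 19/12) (by positivity) j
    have n3 := poch_ne 2 (by positivity) j
    have n4 : (j.factorial : ℝ) ≠ 0 := by positivity
    have n5 : (j:ℝ) + 1 ≠ 0 := by positivity
    have n6 : (k:ℝ) + 11/12 ≠ 0 := by positivity
    have n7 : (k:ℝ) + 19/12 ≠ 0 := by positivity
    push_cast
    generalize poch ((k:ℝ) + 1 + 11/12) j = p1 at *
    generalize poch ((k:ℝ) + 1 + 19/12) j = p2 at *
    generalize poch 2 j = p3 at *
    generalize (j.factorial : ℝ) = p4 at *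
    generalize hu : (k:ℝ) + 11/12 = u at *
    generalize hv : (k:ℝ) + 19/12 = v at *
    rw [pow_succ]
    clear e1 e2 e3 e4 e5 e6 e7 e8 e9
    field_simp
    rw [← hu]
    ring
  · norm_num
end
end
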